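/- arXiv:2111.13246 — 7 statements merged into one kernel-verified Lean document; each statement's English description precedes it below -/
import Mathlib

section
/- Let P and Q be d×d symmetric positive definite real matrices with factorizations P = R Rᵀ and Q = L Lᵀ, where R and L are invertible d×d matrices. Suppose Lᵀ R = U Δ Zᵀ where U and Z are d×d orthogonal matrices and Δ is a diagonal matrix with strictly positive diagonal entries. Then the matrix T = R Z Δ^{-1/2} is invertible with T⁻¹ = Δ^{-1/2} Uᵀ Lᵀ, and the transformation T balances the two Gramians: T⁻¹ P T⁻ᵀ = Δ and Tᵀ Q T = Δ. -/
/-!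
Write `S = Δ^{-1/2}`. Orthogonality of `U` and `Z` turns the factorization of `Lᵀ R` into
`T⁻¹ R = S Δ Zᵀ` and `Lᵀ T = U Δ S`. Since `P = R Rᵀ` and `Q = L Lᵀ`, the two transformed
Gramians are `(T⁻¹ R)(T⁻¹ R)ᵀ` and `(Lᵀ T)ᵀ(Lᵀ T)`, where the orthogonal factors cancel and
leave `S Δ Δ S = Δ`. Likewise `T⁻¹ T = S Δ S = 1`, and a one-sided inverse of a square matrix
is two-sided.
-/

open Matrix

noncomputable section

/-- Given SPD `P = R Rᵀ` and `Q = L Lᵀ` with `R, L` invertible, and an SVD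
`Lᵀ R = U Δ Zᵀ` with `U, Z` orthogonal and `Δ` diagonal with strictly positive entries,
the matrix `T = R Z Δ^{-1/2}` is invertible with `T⁻¹ = Δ^{-1/2} Uᵀ Lᵀ`, and `T` balances
the two Gramians: `T⁻¹ P T⁻ᵀ = Δ` and `Tᵀ Q T = Δ`. -/
theorem balancing_transformation {d : ℕ}
    (P Q R L U Z : Matrix (Fin d) (Fin d) ℝ) (δ : Fin d → ℝ)
    (hP : P.PosDef) (hQ : Q.PosDef)
    (hPf : P = R * Rᵀ) (hQf : Q = L * Lᵀ)
    (hR : IsUnit R) (hL : IsUnit L)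
    (hU : Uᵀ * U = 1 ∧ U * Uᵀ = 1) (hZ : Zᵀ * Z = 1 ∧ Z * Zᵀ = 1)
    (hδ : ∀ i, 0 < δ i)
    (hSVD : Lᵀ * R = U * Matrix.diagonal δ * Zᵀ) :
    let Δinvhalf : Matrix (Fin d) (Fin d) ℝ := Matrix.diagonal fun i => (Real.sqrt (δ i))⁻¹
    let T := R * Z * Δinvhalf
    let Tinv := Δinvhalf * Uᵀ * Lᵀ
    T * Tinv = 1 ∧ Tinv * T = 1 ∧
      Tinv * P * Tinvᵀ = Matrix.diagonal δ ∧ Tᵀ * Q * T = Matrix.diagonal δ := by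
  intro S T Tinv
  have hSΔS : S * diagonal δ * S = 1 := by
    simp only [S, diagonal_mul_diagonal]
    rw [← diagonal_one]
    congr 1
    funext i
    have h := Real.sqrt_pos.2 (hδ i)
    have h2 := Real.mul_self_sqrt (hδ i).le
    field_simp
    linarith
  have hSΔ : S * diagonal δ = diagonal δ * S := by
    simp only [S, diagonal_mul_diagonal, mul_comm]
  have hSt : Sᵀ = S := diagonal_transpose _
  have hΔt : (diagonal δ)ᵀ = diagonal δ := diagonal_transpose _
  have hΔSSΔ : diagonal δ * S * (S * diagonal δ) = diagonal δ := by
    rw [← hSΔ, ← Matrix.mul_assoc, hSΔS, Matrix.one_mul]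
  have hTR : Tinv * R = S * diagonal δ * Zᵀ := by
    calc Tinv * R = S * Uᵀ * (Lᵀ * R) := by simp only [Tinv, Matrix.mul_assoc]
      _ = S * (Uᵀ * U) * diagonal δ * Zᵀ := by rw [hSVD]; simp only [Matrix.mul_assoc]
      _ = _ := by rw [hU.1, Matrix.mul_one]
  have hLT : Lᵀ * T = U * (diagonal δ * S) := by
    calc Lᵀ * T = (Lᵀ * R) * Z * S := by simp only [T, Matrix.mul_assoc]
      _ = U * diagonal δ * (Zᵀ * Z) * S := by rw [hSVD]; simp only [Matrix.mul_assoc]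
      _ = _ := by rw [hZ.1, Matrix.mul_one, Matrix.mul_assoc]
  have hinv : Tinv * T = 1 := by
    calc Tinv * T = (Tinv * R) * Z * S := by simp only [T, Matrix.mul_assoc]
      _ = S * diagonal δ * (Zᵀ * Z) * S := by rw [hTR]; simp only [Matrix.mul_assoc]
      _ = 1 := by rw [hZ.1, Matrix.mul_one, hSΔS]
  refine ⟨mul_eq_one_comm.1 hinv, hinv, ?_, ?_⟩
  · calc Tinv * P * Tinvᵀ = (Tinv * R) * (Tinv * R)ᵀ := by
          rw [hPf, transpose_mul Tinv R]; simp only [Matrix.mul_assoc]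
      _ = S * diagonal δ * (Zᵀ * Z) * (diagonal δ * S) := by
          rw [hTR]
          simp only [transpose_mul, transpose_transpose, hSt, hΔt, Matrix.mul_assoc]
      _ = diagonal δ := by
          rw [hZ.1, Matrix.mul_one, ← hSΔ]
          nth_rewrite 1 [hSΔ]
          exact hΔSSΔ
  · calc Tᵀ * Q * T = (Lᵀ * T)ᵀ * (Lᵀ * T) := by
          rw [hQf, transpose_mul Lᵀ T, transpose_transpose]; simp only [Matrix.mul_assoc]
      _ = S * diagonal δ * (Uᵀ * U) * (diagonal δ * S) := by
          rw [hLT]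
          simp only [transpose_mul, hSt, hΔt, Matrix.mul_assoc]
      _ = diagonal δ := by
          rw [hU.1, Matrix.mul_one, ← hSΔ]
          nth_rewrite 1 [hSΔ]
          exact hΔSSΔ
end
end

section
/- Let P and Q be d×d symmetric positive definite real matrices with factorizations P = R Rᵀ and Q = L Lᵀ, where R and L are invertible d×d matrices. Suppose Lᵀ R = U Δ Zᵀ where U and Z are d×d orthogonal matrices and Δ is a diagonal matrix with strictly positive diagonal entries. Then the columns of V = R Z are generalized eigenvectors of the matrix pencil (Q, P⁻¹) with eigenvalues the squared diagonal entries of Δ, i.e., Q V = P⁻¹ V Δ², and moreover Vᵀ P⁻¹ V = I. -/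
/-!
Everything reduces to `P⁻¹ R = (Rᵀ)⁻¹`, so that `P⁻¹ V = (Rᵀ)⁻¹ Z` for `V = R Z`. Transposing
`Lᵀ R = U Δ Zᵀ` gives `L = (Rᵀ)⁻¹ Z Δ Uᵀ`, while `Lᵀ V = U Δ`; hence
`Q V = L (Lᵀ V) = (Rᵀ)⁻¹ Z Δ Uᵀ U Δ = P⁻¹ V Δ²`, and `Vᵀ P⁻¹ V = Zᵀ Rᵀ (Rᵀ)⁻¹ Z = 1`.
-/

open Matrix

noncomputable section

/-- Given SPD `P = R Rᵀ` and `Q = L Lᵀ` with `R, L` invertible, and an SVD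
`Lᵀ R = U Δ Zᵀ` with `U, Z` orthogonal and `Δ` diagonal with strictly positive entries,
the columns of `V = R Z` are generalized eigenvectors of the pencil `(Q, P⁻¹)` with
eigenvalues the squared diagonal entries of `Δ`, i.e. `Q V = P⁻¹ V Δ²`, and moreover
`Vᵀ P⁻¹ V = I`. -/
theorem balancing_generalized_eigenvectors {d : ℕ}
    (P Q R L U Z : Matrix (Fin d) (Fin d) ℝ) (δ : Fin d → ℝ)
    (hP : P.PosDef) (hQ : Q.PosDef)
    (hPf : P = R * Rᵀ) (hQf : Q = L * Lᵀ)
    (hR : IsUnit R) (hL : IsUnit L)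
    (hU : Uᵀ * U = 1 ∧ U * Uᵀ = 1) (hZ : Zᵀ * Z = 1 ∧ Z * Zᵀ = 1)
    (hδ : ∀ i, 0 < δ i)
    (hSVD : Lᵀ * R = U * Matrix.diagonal δ * Zᵀ) :
    Q * (R * Z) = P⁻¹ * (R * Z) * Matrix.diagonal (fun i => δ i ^ 2) ∧
      (R * Z)ᵀ * P⁻¹ * (R * Z) = 1 := by
  have hRdet : IsUnit R.det := (Matrix.isUnit_iff_isUnit_det R).mp hR
  have hRTdet : IsUnit Rᵀ.det := by rwa [Matrix.det_transpose]
  have hPR : P⁻¹ * (R * Z) = Rᵀ⁻¹ * Z := by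
    rw [hPf, Matrix.mul_inv_rev, Matrix.mul_assoc, Matrix.nonsing_inv_mul_cancel_left _ _ hRdet]
  -- Transposing the singular value decomposition and solving for `L`.
  have hLeq : L = Rᵀ⁻¹ * (Z * (Matrix.diagonal δ * Uᵀ)) := by
    have h := congrArg Matrix.transpose hSVD
    simp only [Matrix.transpose_mul, Matrix.transpose_transpose, Matrix.diagonal_transpose] at h
    rw [← h, Matrix.nonsing_inv_mul_cancel_left _ _ hRTdet]
  have hLV : Lᵀ * (R * Z) = U * Matrix.diagonal δ := by
    rw [← Matrix.mul_assoc, hSVD, Matrix.mul_assoc, hZ.1, Matrix.mul_one]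
  have hsq : Matrix.diagonal (fun i => δ i ^ 2) = Matrix.diagonal δ * Matrix.diagonal δ := by
    simp only [Matrix.diagonal_mul_diagonal, sq]
  constructor
  · calc Q * (R * Z) = L * (U * Matrix.diagonal δ) := by rw [hQf, Matrix.mul_assoc, hLV]
      _ = Rᵀ⁻¹ * (Z * (Matrix.diagonal δ * Uᵀ)) * (U * Matrix.diagonal δ) := by rw [← hLeq]
      _ = Rᵀ⁻¹ * (Z * (Matrix.diagonal δ * ((Uᵀ * U) * Matrix.diagonal δ))) := by
        simp only [Matrix.mul_assoc]
      _ = P⁻¹ * (R * Z) * Matrix.diagonal (fun i => δ i ^ 2) := by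
        rw [hU.1, Matrix.one_mul, hPR, hsq, Matrix.mul_assoc]
  · rw [Matrix.mul_assoc, hPR, Matrix.transpose_mul, Matrix.mul_assoc,
      Matrix.mul_nonsing_inv_cancel_left _ _ hRTdet, hZ.1]
end
end

section
/- Let A ∈ ℝ^{d×d}, B ∈ ℝ^{d×m}, C ∈ ℝ^{k×d}, and let P and Q be d×d symmetric positive definite matrices satisfying the Lyapunov equations A P + P Aᵀ = -B Bᵀ and Aᵀ Q + Q A = -Cᵀ C. Let P = R Rᵀ and Q = L Lᵀ with R, L invertible, let Lᵀ R = U Δ Zᵀ with U, Z orthogonal and Δ diagonal with strictly positive entries δ₁ ≥ ⋯ ≥ δ_d, and for 1 ≤ r ≤ d let U_r, Z_r denote the first r columns of U, Z and Δ_r the leading r×r block of Δ. Define T_r = R Z_r Δ_r^{-1/2}, S_rᵀ = Δ_r^{-1/2} U_rᵀ Lᵀ, A_r = S_rᵀ A T_r, B_r = S_rᵀ B, C_r = C T_r. Then the reduced quantities satisfy the balanced reduced Lyapunov equations A_r Δ_r + Δ_r A_rᵀ + B_r B_rᵀ = 0 and A_rᵀ Δ_r + Δ_r A_r + C_rᵀ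 C_r = 0. -/
open Matrix

noncomputable section

/-!
The whole argument rests on two intertwining identities between the Gramians and the projection
matrices, `Sᵀ P = Δ_r Tᵀ` and `Q T = S Δ_r`. Both come from the singular value decomposition
`Lᵀ R = U Δ Zᵀ`: orthogonality of `U` gives `U_rᵀ (Lᵀ R) = Δ_r Z_rᵀ`, orthogonality of `Z` gives
`(Lᵀ R) Z_r = U_r Δ_r` (`leading_mul_svd`), and the diagonal factors commute. With these identities,
`A_r Δ_r + Δ_r A_rᵀ = Sᵀ (A P + P Aᵀ) S` and `A_rᵀ Δ_r + Δ_r A_r = Tᵀ (Aᵀ Q + Q A) T`, so the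
reduced Lyapunov equations are the congruences of the original ones by `S` and `T`
(`reduced_lyapunov`).
-/

/-- Selecting columns `e` of the orthogonal left factor of `U Δ Zᵀ` selects the corresponding
singular values and columns of the right factor. -/
lemma leading_mul_svd {d r : ℕ} (e : Fin r → Fin d) (U Z : Matrix (Fin d) (Fin d) ℝ)
    (δ : Fin d → ℝ) (hU : Uᵀ * U = 1) :
    (U.submatrix id e)ᵀ * (U * diagonal δ * Zᵀ)
      = diagonal (fun i => δ (e i)) * (Z.submatrix id e)ᵀ := by
  have h : (U.submatrix id e)ᵀ * (U * diagonal δ * Zᵀ)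
      = (Uᵀ * (U * diagonal δ * Zᵀ)).submatrix e id := rfl
  rw [h, Matrix.mul_assoc U, ← Matrix.mul_assoc, hU, Matrix.one_mul]
  ext i j
  simp [diagonal_mul]

/-- A Petrov–Galerkin projection `W A T` satisfies a Lyapunov equation with Gramian `D` as soon as
`W X = D Tᵀ`, where `X` is a symmetric solution of the full equation. The observability equation
is the instance with `A`, `W`, `T` replaced by `Aᵀ`, `Tᵀ`, `Wᵀ`. -/
lemma reduced_lyapunov {d r m : ℕ} (A X : Matrix (Fin d) (Fin d) ℝ) (B : Matrix (Fin d) (Fin m) ℝ)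
    (W : Matrix (Fin r) (Fin d) ℝ) (T : Matrix (Fin d) (Fin r) ℝ) (D : Matrix (Fin r) (Fin r) ℝ)
    (hX : Xᵀ = X) (hD : Dᵀ = D) (hLyap : A * X + X * Aᵀ = -(B * Bᵀ)) (hW : W * X = D * Tᵀ) :
    (W * A * T) * D + D * (W * A * T)ᵀ + (W * B) * (W * B)ᵀ = 0 := by
  have hT : X * Wᵀ = T * D := by
    simpa [transpose_mul, hX, hD] using congrArg transpose hW
  calc (W * A * T) * D + D * (W * A * T)ᵀ + (W * B) * (W * B)ᵀ
      = W * A * (T * D) + (D * Tᵀ) * (Aᵀ * Wᵀ) + W * (B * Bᵀ) * Wᵀ := by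
        simp only [transpose_mul, Matrix.mul_assoc]
    _ = W * (A * X + X * Aᵀ + B * Bᵀ) * Wᵀ := by
        rw [← hT, ← hW]
        simp only [Matrix.mul_add, Matrix.add_mul, Matrix.mul_assoc]
    _ = 0 := by rw [hLyap]; simp

/-- With Gramians `P, Q` solving the Lyapunov equations
`A P + P Aᵀ = -B Bᵀ` and `Aᵀ Q + Q A = -Cᵀ C`, and with the order-`r` balanced truncation
construction (`P = R Rᵀ`, `Q = L Lᵀ`, `Lᵀ R = U Δ Zᵀ`, `T_r = R Z_r Δ_r^{-1/2}`,
`S_rᵀ = Δ_r^{-1/2} U_rᵀ Lᵀ`, `A_r = S_rᵀ A T_r`, `B_r = S_rᵀ B`, `C_r = C T_r`), the reduced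
quantities satisfy the balanced reduced Lyapunov equations
`A_r Δ_r + Δ_r A_rᵀ + B_r B_rᵀ = 0` and `A_rᵀ Δ_r + Δ_r A_r + C_rᵀ C_r = 0`. -/
theorem balanced_truncation_reduced_lyapunov {d m k : ℕ} (r : ℕ) (hr1 : 1 ≤ r) (hr : r ≤ d)
    (A : Matrix (Fin d) (Fin d) ℝ) (B : Matrix (Fin d) (Fin m) ℝ) (C : Matrix (Fin k) (Fin d) ℝ)
    (P Q R L U Z : Matrix (Fin d) (Fin d) ℝ) (δ : Fin d → ℝ)
    (hP : P.PosDef) (hQ : Q.PosDef)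
    (hLyapP : A * P + P * Aᵀ = -(B * Bᵀ)) (hLyapQ : Aᵀ * Q + Q * A = -(Cᵀ * C))
    (hPf : P = R * Rᵀ) (hQf : Q = L * Lᵀ)
    (hR : IsUnit R) (hL : IsUnit L)
    (hU : Uᵀ * U = 1 ∧ U * Uᵀ = 1) (hZ : Zᵀ * Z = 1 ∧ Z * Zᵀ = 1)
    (hδpos : ∀ i, 0 < δ i) (hδmono : ∀ i j : Fin d, i ≤ j → δ j ≤ δ i)
    (hSVD : Lᵀ * R = U * Matrix.diagonal δ * Zᵀ) :
    let Zr : Matrix (Fin d) (Fin r) ℝ := Z.submatrix id (Fin.castLE hr)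
    let Ur : Matrix (Fin d) (Fin r) ℝ := U.submatrix id (Fin.castLE hr)
    let Δr : Matrix (Fin r) (Fin r) ℝ := Matrix.diagonal fun i : Fin r => δ (Fin.castLE hr i)
    let Δrinvhalf : Matrix (Fin r) (Fin r) ℝ :=
      Matrix.diagonal fun i : Fin r => (Real.sqrt (δ (Fin.castLE hr i)))⁻¹
    let Tr := R * Zr * Δrinvhalf
    let Srt := Δrinvhalf * Urᵀ * Lᵀ
    let Ar := Srt * A * Tr
    let Br := Srt * B
    let Cr := C * Tr
    Ar * Δr + Δr * Arᵀ + Br * Brᵀ = 0 ∧ Arᵀ * Δr + Δr * Ar + Crᵀ * Cr = 0 := by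
  intro Zr Ur Δr H Tr Srt Ar Br Cr
  have hΔt : Δrᵀ = Δr := diagonal_transpose _
  have hHt : Hᵀ = H := diagonal_transpose _
  have hcomm : H * Δr = Δr * H := by
    simp only [H, Δr, diagonal_mul_diagonal, mul_comm]
  have hUr : Urᵀ * (Lᵀ * R) = Δr * Zrᵀ := by
    rw [hSVD]; exact leading_mul_svd _ U Z δ hU.1
  have hZr : Zrᵀ * (Rᵀ * L) = Δr * Urᵀ := by
    have h : Rᵀ * L = Z * diagonal δ * Uᵀ := by
      simpa [transpose_mul, Matrix.mul_assoc] using congrArg transpose hSVD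
    rw [h]; exact leading_mul_svd _ Z U δ hZ.1
  have hSP : Srt * P = Δr * Trᵀ := by
    calc Srt * P = H * (Urᵀ * (Lᵀ * R)) * Rᵀ := by
          simp only [Srt, hPf, Matrix.mul_assoc]
      _ = (H * Δr) * Zrᵀ * Rᵀ := by rw [hUr]; simp only [Matrix.mul_assoc]
      _ = Δr * Trᵀ := by
          rw [hcomm]; simp only [Tr, transpose_mul, hHt, Matrix.mul_assoc]
  have hTQ : Trᵀ * Q = Δr * Srtᵀᵀ := by
    calc Trᵀ * Q = H * (Zrᵀ * (Rᵀ * L)) * Lᵀ := by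
          simp only [Tr, hQf, transpose_mul, hHt, Matrix.mul_assoc]
      _ = (H * Δr) * Urᵀ * Lᵀ := by rw [hZr]; simp only [Matrix.mul_assoc]
      _ = Δr * Srtᵀᵀ := by
          rw [hcomm, transpose_transpose]; simp only [Srt, Matrix.mul_assoc]
  have hPt : Pᵀ = P := by rw [hPf]; simp
  have hQt : Qᵀ = Q := by rw [hQf]; simp
  refine ⟨reduced_lyapunov A P B Srt Tr Δr hPt hΔt hLyapP hSP, ?_⟩
  have h := reduced_lyapunov Aᵀ Q Cᵀ Trᵀ Srtᵀ Δr hQt hΔt (by simpa using hLyapQ) hTQ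
  have hA : Trᵀ * Aᵀ * Srtᵀ = Arᵀ := by simp only [Ar, transpose_mul, Matrix.mul_assoc]
  have hC : Trᵀ * Cᵀ = Crᵀ := (transpose_mul _ _).symm
  rwa [hA, hC, transpose_transpose, transpose_transpose] at h
end
end

section
/- Let A ∈ ℝ^{d×d} be Hurwitz, B ∈ ℝ^{d×m}, C ∈ ℝ^{k×d}, and let P and Q be d×d symmetric positive definite matrices satisfying A P + P Aᵀ = -B Bᵀ and Aᵀ Q + Q A = -Cᵀ C. Let P = R Rᵀ and Q = L Lᵀ with R, L invertible, let Lᵀ R = U Δ Zᵀ with U, Z orthogonal and Δ diagonal with pairwise distinct strictly positive entries δ₁ > δ₂ > ⋯ > δ_d > 0, and for 1 ≤ r ≤ d define T_r = R Z_r Δ_r^{-1/2}, S_rᵀ = Δ_r^{-1/2} U_rᵀ Lᵀ, and A_r = S_rᵀ A T_r. Then the reduced matrix A_r is Hurwitz: every eigenvalue of A_r has strictly negative real part. -/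
/-!
In balanced coordinates `M = S A T`, with `T = R Z Δ^{-1/2}` and `S = Δ^{-1/2} Uᵀ Lᵀ = T⁻¹`, both
Gramians become `Δ`: with `b = S B` and `c = C T`,
`M Δ + Δ Mᵀ = -b bᵀ` and `Mᵀ Δ + Δ M = -cᵀ c`. The reduced matrix is the leading `r × r` block
of `M`, and this block satisfies the same two equations with the leading parts of `Δ`, `b`, `c`.

Suppose the block has an eigenvalue `μ` with `0 ≤ re μ`. Testing the second equation on an
eigenvector `v` gives `2 (re μ) v*Δv = -|c v|²`, so `re μ = 0` and `c v = 0`, and then `Δ v` is an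
eigenvector of the adjoint for `-μ` (`lyapunov_eigenvector`). The same argument for the first
equation gives `bᵀ Δ v = 0` and shows that `Δ² v` is again an eigenvector for `μ`. The
`μ`-eigenspace is thus invariant under `Δ²`, and since the `δ i` are positive and distinct, it
contains a coordinate vector `e i`. Hence row `i` of `b` and column `i` of `c` vanish
(`exists_zero_row_col`).

For this `i` the entries of the full equations read `M j i δ i + δ j M i j = 0` and
`M i j δ i + δ j M j i = 0` for every `j`, which forces column `i` of `M` to vanish
(`col_eq_zero`). Then `det A = 0`, contradicting that `A` is Hurwitz.
-/

open Matrix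

noncomputable section

/-- A real square matrix is Hurwitz (stable) if every eigenvalue of its complexification
has strictly negative real part. -/
def IsHurwitz {d : ℕ} (A : Matrix (Fin d) (Fin d) ℝ) : Prop :=
  ∀ μ ∈ spectrum ℂ (A.map Complex.ofReal), μ.re < 0

/-- The Lyapunov inertia argument: if an eigenvalue `μ` of `N` has nonnegative real part, then `μ` is
purely imaginary, its eigenvectors `v` satisfy `c v = 0`, and `Δ v` is an eigenvector of `Nᴴ` for
`-μ`. It follows from testing the Lyapunov equation against `v`. -/
lemma lyapunov_eigenvector {n k : ℕ} (N : Matrix (Fin n) (Fin n) ℂ) (c : Matrix (Fin k) (Fin n) ℂ)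
    (δ : Fin n → ℝ) (hδ : ∀ i, 0 < δ i)
    (h : Nᴴ * diagonal (fun i => (δ i : ℂ)) + diagonal (fun i => (δ i : ℂ)) * N = -(cᴴ * c))
    (μ : ℂ) (hμ : 0 ≤ μ.re) (v : Fin n → ℂ) (hv : v ≠ 0) (hN : N *ᵥ v = μ • v) :
    μ.re = 0 ∧ c *ᵥ v = 0 ∧
      Nᴴ *ᵥ (diagonal (fun i => (δ i : ℂ)) *ᵥ v) =
        (-μ) • (diagonal (fun i => (δ i : ℂ)) *ᵥ v) := by
  set D : Matrix (Fin n) (Fin n) ℂ := diagonal (fun i => (δ i : ℂ)) with hD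
  have hvec : Nᴴ *ᵥ (D *ᵥ v) + μ • (D *ᵥ v) = -(cᴴ *ᵥ (c *ᵥ v)) := by
    have := congrArg (fun X => X *ᵥ v) h
    simpa [add_mulVec, neg_mulVec, ← mulVec_mulVec, hN, mulVec_smul] using this
  have hq : star v ⬝ᵥ (D *ᵥ v) = ((∑ i, δ i * Complex.normSq (v i) : ℝ) : ℂ) := by
    simp only [hD, dotProduct, mulVec_diagonal, Pi.star_apply, Complex.ofReal_sum,
      Complex.ofReal_mul, Complex.normSq_eq_conj_mul_self, RCLike.star_def]
    exact Finset.sum_congr rfl fun i _ => by ring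
  have hc : star v ⬝ᵥ (cᴴ *ᵥ (c *ᵥ v)) =
      ((∑ i, Complex.normSq ((c *ᵥ v) i) : ℝ) : ℂ) := by
    rw [dotProduct_mulVec, ← star_mulVec]
    simp only [dotProduct, Pi.star_apply, Complex.ofReal_sum,
      Complex.normSq_eq_conj_mul_self, RCLike.star_def]
  have hadj : star v ⬝ᵥ (Nᴴ *ᵥ (D *ᵥ v)) = star μ * (star v ⬝ᵥ (D *ᵥ v)) := by
    rw [dotProduct_mulVec, ← star_mulVec, hN, star_smul, smul_dotProduct, smul_eq_mul]
  have key := congrArg (fun w => (star v ⬝ᵥ w).re) hvec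
  simp only [dotProduct_add, dotProduct_neg, dotProduct_smul, hadj, hc, hq, smul_eq_mul,
    Complex.add_re, Complex.neg_re, Complex.re_mul_ofReal, Complex.ofReal_re,
    RCLike.star_def, Complex.conj_re] at key
  have hqpos : 0 < ∑ i, δ i * Complex.normSq (v i) := by
    obtain ⟨i, hi⟩ := Function.ne_iff.mp hv
    exact Finset.sum_pos' (fun j _ => mul_nonneg (hδ j).le (Complex.normSq_nonneg _))
      ⟨i, Finset.mem_univ _, mul_pos (hδ i) (Complex.normSq_pos.mpr hi)⟩
  have hcnn : 0 ≤ ∑ i, Complex.normSq ((c *ᵥ v) i) :=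
    Finset.sum_nonneg fun i _ => Complex.normSq_nonneg _
  have hprod := mul_nonneg hμ hqpos.le
  have hcv : c *ᵥ v = 0 := by
    have h0 : ∑ i, Complex.normSq ((c *ᵥ v) i) = 0 := by linarith
    rw [Finset.sum_eq_zero_iff_of_nonneg fun i _ => Complex.normSq_nonneg _] at h0
    ext i
    exact Complex.normSq_eq_zero.mp (h0 i (Finset.mem_univ i))
  refine ⟨?_, hcv, ?_⟩
  · have h0 : μ.re * ∑ i, δ i * Complex.normSq (v i) = 0 := by linarith
    exact (mul_eq_zero.mp h0).resolve_right hqpos.ne'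
  · rw [hcv, mulVec_zero, neg_zero] at hvec
    rw [neg_smul]
    exact eq_neg_of_add_eq_zero_left hvec

/-- An unstable eigenvalue of a balanced system with distinct Hankel singular values forces some
state to be disconnected from both the input and the output. -/
lemma exists_zero_row_col {n m k : ℕ} (M : Matrix (Fin n) (Fin n) ℝ)
    (b : Matrix (Fin n) (Fin m) ℝ) (c : Matrix (Fin k) (Fin n) ℝ)
    (δ : Fin n → ℝ) (hδ : ∀ i, 0 < δ i) (hinj : Function.Injective δ)
    (hb : M * diagonal δ + diagonal δ * Mᵀ = -(b * bᵀ))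
    (hc : Mᵀ * diagonal δ + diagonal δ * M = -(cᵀ * c))
    (μ : ℂ) (hμs : μ ∈ spectrum ℂ (M.map Complex.ofReal)) (hμ : 0 ≤ μ.re) :
    ∃ i, (∀ j, b i j = 0) ∧ ∀ j, c j i = 0 := by
  set N : Matrix (Fin n) (Fin n) ℂ := M.map Complex.ofReal with hNdef
  set D : Matrix (Fin n) (Fin n) ℂ := diagonal (fun i => (δ i : ℂ)) with hD
  set b' : Matrix (Fin n) (Fin m) ℂ := b.map Complex.ofReal with hb'
  set c' : Matrix (Fin k) (Fin n) ℂ := c.map Complex.ofReal with hc'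
  have hbC : Nᴴᴴ * D + D * Nᴴ = -(b'ᴴᴴ * b'ᴴ) := by
    ext i j
    have := congrArg (Complex.ofReal) (congrFun (congrFun hb i) j)
    simpa [hNdef, hD, hb', Matrix.mul_apply, diagonal_apply] using this
  have hcC : Nᴴ * D + D * N = -(c'ᴴ * c') := by
    ext i j
    have := congrArg (Complex.ofReal) (congrFun (congrFun hc i) j)
    simpa [hNdef, hD, hc', Matrix.mul_apply, diagonal_apply] using this
  have hDne : ∀ v : Fin n → ℂ, v ≠ 0 → D *ᵥ v ≠ 0 := by
    intro v hv h0
    apply hv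
    ext i
    have := congrFun h0 i
    simpa [hD, mulVec_diagonal, (hδ i).ne'] using this
  have step : ∀ v : Fin n → ℂ, v ≠ 0 → N *ᵥ v = μ • v →
      c' *ᵥ v = 0 ∧ b'ᴴ *ᵥ (D *ᵥ v) = 0 ∧ N *ᵥ (D *ᵥ (D *ᵥ v)) = μ • (D *ᵥ (D *ᵥ v)) := by
    intro v hv hNv
    obtain ⟨h1, h2, h3⟩ := lyapunov_eigenvector N c' δ hδ hcC μ hμ v hv hNv
    obtain ⟨-, h5, h6⟩ := lyapunov_eigenvector Nᴴ b'ᴴ δ hδ hbC (-μ) (by simp [h1]) (D *ᵥ v)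
      (hDne v hv) h3
    rw [conjTranspose_conjTranspose, neg_neg] at h6
    exact ⟨h2, h5, h6⟩
  -- By `step`, `Δ²` preserves the eigenspace `V`; the restriction of `Δ²` to `V` therefore has an
  -- eigenvector of its own.
  let V : Submodule ℂ (Fin n → ℂ) := Module.End.eigenspace (toLin' N) μ
  have hmem : ∀ v, v ∈ V ↔ N *ᵥ v = μ • v := fun v => by
    simp [V]
  have hVne : V ≠ ⊥ := by
    have : Module.End.HasEigenvalue (toLin' N) μ := by
      rw [Module.End.hasEigenvalue_iff_mem_spectrum, spectrum_toLin']
      exact hμs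
    exact this
  have hinv : ∀ v ∈ V, toLin' (D * D) v ∈ V := by
    intro v hv
    by_cases h0 : v = 0
    · simp [h0]
    · rw [toLin'_apply, ← mulVec_mulVec, hmem]
      exact (step v h0 ((hmem v).mp hv)).2.2
  have : Nontrivial V := Submodule.nontrivial_iff_ne_bot.mpr hVne
  obtain ⟨ν, hν⟩ := Module.End.exists_eigenvalue ((toLin' (D * D)).restrict hinv)
  obtain ⟨⟨v, hvV⟩, hv⟩ := hν.exists_hasEigenvector
  have hv0 : v ≠ 0 := fun h => hv.2 (Subtype.ext h)
  have hev : ∀ j, (δ j : ℂ) * (δ j * v j) = ν * v j := by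
    intro j
    have h1 := congrFun (congrArg Subtype.val hv.apply_eq_smul) j
    simpa [← mulVec_mulVec, hD, mulVec_diagonal, mul_assoc] using h1
  obtain ⟨i, hi⟩ := Function.ne_iff.mp hv0
  have hi : v i ≠ 0 := hi
  have hνi : ν = (δ i : ℂ) * δ i := by
    have := hev i
    rw [← mul_assoc] at this
    exact (mul_right_cancel₀ hi this).symm
  -- As the squares of the `δ j` are distinct, an eigenvector of `Δ²` is a multiple of `e i`.
  have hvj : v = Pi.single i (v i) := by
    ext j
    by_cases hij : j = i
    · subst hij; simp
    · rw [Pi.single_eq_of_ne hij]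
      by_contra hvj
      have h1 := hev j
      rw [← mul_assoc, hνi] at h1
      have h2 : δ j * δ j = δ i * δ i := by exact_mod_cast mul_right_cancel₀ hvj h1
      exact hij (hinj ((mul_self_inj (hδ j).le (hδ i).le).mp h2))
  obtain ⟨hcv, hbv, -⟩ := step v hv0 ((hmem v).mp hvV)
  refine ⟨i, fun j => ?_, fun j => ?_⟩
  · have := congrFun hbv j
    rw [hvj] at this
    simpa [hD, hb', mulVec_smul, (hδ i).ne', hi] using this
  · have := congrFun hcv j
    rw [hvj] at this
    simpa [hc', hi] using this

/-- In a balanced realization, a state with no input and no output has zero dynamics. -/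
lemma col_eq_zero {n m k : ℕ} (M : Matrix (Fin n) (Fin n) ℝ)
    (b : Matrix (Fin n) (Fin m) ℝ) (c : Matrix (Fin k) (Fin n) ℝ)
    (δ : Fin n → ℝ) (hδ : ∀ i, 0 < δ i) (hinj : Function.Injective δ)
    (hb : M * diagonal δ + diagonal δ * Mᵀ = -(b * bᵀ))
    (hc : Mᵀ * diagonal δ + diagonal δ * M = -(cᵀ * c))
    (i : Fin n) (hbi : ∀ j, b i j = 0) (hci : ∀ j, c j i = 0) (j : Fin n) : M j i = 0 := by
  have h1 := congrFun (congrFun hb j) i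
  have h2 := congrFun (congrFun hc j) i
  rw [Matrix.add_apply, mul_diagonal, diagonal_mul] at h1 h2
  simp only [transpose_apply, Matrix.neg_apply, Matrix.mul_apply,
    hbi, hci, mul_zero, Finset.sum_const_zero, neg_zero] at h1 h2
  by_cases hij : j = i
  · subst hij
    have h3 : M j j * δ j = 0 := by linarith
    exact (mul_eq_zero.mp h3).resolve_right (hδ j).ne'
  · have hne : δ i - δ j ≠ 0 := fun h => hij (hinj (sub_eq_zero.mp h)).symm
    have hs : δ i + δ j ≠ 0 := (add_pos (hδ i) (hδ j)).ne'
    have h3 : M j i * ((δ i - δ j) * (δ i + δ j)) = 0 := by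
      linear_combination δ i * h1 - δ j * h2
    exact (mul_eq_zero.mp h3).resolve_right (mul_ne_zero hne hs)

/-- With `A` Hurwitz, Gramians `P, Q` solving `A P + P Aᵀ = -B Bᵀ` and
`Aᵀ Q + Q A = -Cᵀ C`, pairwise distinct Hankel singular values `δ₁ > ⋯ > δ_d > 0`, and the
order-`r` balanced truncation construction, the reduced matrix `A_r = S_rᵀ A T_r` is
Hurwitz: every eigenvalue of `A_r` has strictly negative real part. -/
theorem balanced_truncation_reduced_stable {d m k : ℕ} (r : ℕ) (hr1 : 1 ≤ r) (hr : r ≤ d)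
    (A : Matrix (Fin d) (Fin d) ℝ) (hA : IsHurwitz A)
    (B : Matrix (Fin d) (Fin m) ℝ) (C : Matrix (Fin k) (Fin d) ℝ)
    (P Q R L U Z : Matrix (Fin d) (Fin d) ℝ) (δ : Fin d → ℝ)
    (hP : P.PosDef) (hQ : Q.PosDef)
    (hLyapP : A * P + P * Aᵀ = -(B * Bᵀ)) (hLyapQ : Aᵀ * Q + Q * A = -(Cᵀ * C))
    (hPf : P = R * Rᵀ) (hQf : Q = L * Lᵀ)
    (hR : IsUnit R) (hL : IsUnit L)
    (hU : Uᵀ * U = 1 ∧ U * Uᵀ = 1) (hZ : Zᵀ * Z = 1 ∧ Z * Zᵀ = 1)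
    (hδpos : ∀ i, 0 < δ i) (hδstrict : ∀ i j : Fin d, i < j → δ j < δ i)
    (hSVD : Lᵀ * R = U * Matrix.diagonal δ * Zᵀ) :
    let Zr : Matrix (Fin d) (Fin r) ℝ := Z.submatrix id (Fin.castLE hr)
    let Ur : Matrix (Fin d) (Fin r) ℝ := U.submatrix id (Fin.castLE hr)
    let Δrinvhalf : Matrix (Fin r) (Fin r) ℝ :=
      Matrix.diagonal fun i : Fin r => (Real.sqrt (δ (Fin.castLE hr i)))⁻¹
    let Tr := R * Zr * Δrinvhalf
    let Srt := Δrinvhalf * Urᵀ * Lᵀ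
    let Ar := Srt * A * Tr
    IsHurwitz Ar := by
  intro Zr Ur Δrinvhalf Tr Srt Ar μ hμ
  by_contra hneg
  have hμ0 : 0 ≤ μ.re := not_lt.mp hneg
  have hinj : Function.Injective δ :=
    (show StrictAnti δ from fun i j h => hδstrict i j h).injective
  -- `T` and `S` are the full-order (`r = d`) projection matrices, `E = Δ^{-1/2}`.
  let E : Matrix (Fin d) (Fin d) ℝ := diagonal fun i => (Real.sqrt (δ i))⁻¹
  let T := R * Z * E
  let S := E * Uᵀ * Lᵀ
  let M := S * A * T
  have hEDE : E * diagonal δ * E = 1 := by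
    simp only [E, diagonal_mul_diagonal, ← diagonal_one]
    congr 1
    ext i
    have h1 := Real.mul_self_sqrt (hδpos i).le
    have h2 := (Real.sqrt_pos.mpr (hδpos i)).ne'
    field_simp
    nlinarith
  have hEt : Eᵀ = E := diagonal_transpose _
  have hEED' : E * diagonal δ * Eᵀ = 1 := by rw [hEt, hEDE]
  have hST : S * T = 1 := by
    calc S * T = E * (Uᵀ * (Lᵀ * R) * Z) * E := by simp only [S, T, Matrix.mul_assoc]
      _ = E * ((Uᵀ * U) * diagonal δ * (Zᵀ * Z)) * E := by
        rw [hSVD]; simp only [Matrix.mul_assoc]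
      _ = 1 := by rw [hU.1, hZ.1, Matrix.one_mul, Matrix.mul_one, hEDE]
  have hTS : Tᵀ * Sᵀ = 1 := by rw [← transpose_mul, hST, transpose_one]
  have hPT : P = T * diagonal δ * Tᵀ := by
    calc P = R * (Z * Zᵀ) * Rᵀ := by rw [hZ.2, Matrix.mul_one, hPf]
      _ = R * Z * (E * diagonal δ * Eᵀ) * Zᵀ * Rᵀ := by
        rw [hEED', Matrix.mul_one]; simp only [Matrix.mul_assoc]
      _ = T * diagonal δ * Tᵀ := by simp only [T, transpose_mul, Matrix.mul_assoc]
  have hQS : Q = Sᵀ * diagonal δ * S := by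
    calc Q = L * (U * Uᵀ) * Lᵀ := by rw [hU.2, Matrix.mul_one, hQf]
      _ = L * U * (Eᵀ * diagonal δ * E) * Uᵀ * Lᵀ := by
        rw [hEt, hEDE, Matrix.mul_one]; simp only [Matrix.mul_assoc]
      _ = Sᵀ * diagonal δ * S := by
        simp only [S, transpose_mul, transpose_transpose, Matrix.mul_assoc]
  have hb : M * diagonal δ + diagonal δ * Mᵀ = -((S * B) * (S * B)ᵀ) := by
    calc M * diagonal δ + diagonal δ * Mᵀ
        = M * diagonal δ * (Tᵀ * Sᵀ) + (S * T) * diagonal δ * Mᵀ := by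
          rw [hTS, hST, Matrix.mul_one, Matrix.one_mul]
      _ = S * (A * P + P * Aᵀ) * Sᵀ := by
          rw [hPT]
          simp only [M, transpose_mul, Matrix.mul_assoc, Matrix.mul_add, Matrix.add_mul]
      _ = -((S * B) * (S * B)ᵀ) := by
          rw [hLyapP]
          simp only [transpose_mul, Matrix.mul_assoc, Matrix.mul_neg, Matrix.neg_mul]
  have hc : Mᵀ * diagonal δ + diagonal δ * M = -((C * T)ᵀ * (C * T)) := by
    calc Mᵀ * diagonal δ + diagonal δ * M
        = Mᵀ * diagonal δ * (S * T) + (Tᵀ * Sᵀ) * diagonal δ * M := by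
          rw [hTS, hST, Matrix.mul_one, Matrix.one_mul]
      _ = Tᵀ * (Aᵀ * Q + Q * A) * T := by
          rw [hQS]
          simp only [M, transpose_mul, Matrix.mul_assoc, Matrix.mul_add, Matrix.add_mul]
      _ = -((C * T)ᵀ * (C * T)) := by
          rw [hLyapQ]
          simp only [transpose_mul, Matrix.mul_assoc, Matrix.mul_neg, Matrix.neg_mul]
  let e : Fin r → Fin d := Fin.castLE hr
  have hTr : Tr = T.submatrix id e := by
    ext i j
    simp only [Tr, T, Zr, Δrinvhalf, E, e, mul_diagonal, submatrix_apply]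
    rfl
  have hSr : Srt = S.submatrix e id := by
    ext i j
    simp only [Srt, S, Ur, Δrinvhalf, E, e, Matrix.mul_assoc, diagonal_mul, submatrix_apply]
    rfl
  have hAr : Ar = M.submatrix e e := by
    simp only [Ar, hTr, hSr, M]
    rfl
  -- Entries of the balanced equations with both indices below `r` give those of the block.
  obtain ⟨i, hbi, hci⟩ := exists_zero_row_col Ar ((S * B).submatrix e id)
    ((C * T).submatrix id e) (δ ∘ e) (fun i => hδpos _)
    (hinj.comp (Fin.castLE_injective hr))
    (by
      rw [hAr]
      ext i j
      have := congrFun (congrFun hb (e i)) (e j)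
      rw [Matrix.add_apply, mul_diagonal, diagonal_mul] at this ⊢
      exact this)
    (by
      rw [hAr]
      ext i j
      have := congrFun (congrFun hc (e i)) (e j)
      rw [Matrix.add_apply, mul_diagonal, diagonal_mul] at this ⊢
      exact this)
    μ hμ hμ0
  have hcol := col_eq_zero M (S * B) (C * T) δ hδpos hinj hb hc (e i) hbi hci
  have hdetM : M.det = 0 := det_eq_zero_of_column_eq_zero (e i) hcol
  have hdetST : S.det * T.det = 1 := by rw [← det_mul, hST, det_one]
  have hdetA : A.det = 0 := by
    simp only [M, det_mul] at hdetM
    linear_combination hdetM - A.det * hdetST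
  have h0 : (0 : ℂ) ∈ spectrum ℂ (A.map Complex.ofReal) := by
    rw [spectrum.zero_mem_iff, isUnit_iff_isUnit_det]
    have : (A.map Complex.ofReal).det = ((A.det : ℝ) : ℂ) :=
      (RingHom.map_det Complex.ofRealHom A).symm
    simp [this, hdetA]
  exact lt_irrefl _ (hA 0 h0)
end
end

section
/- Let Γ_pr ∈ ℝ^{d×d} be symmetric positive definite with Γ_pr = R Rᵀ, R invertible, and let Q, H ∈ ℝ^{d×d} be symmetric positive semidefinite with factorizations Q = L Lᵀ and H = L̃ L̃ᵀ. Suppose Lᵀ R = U Δ Zᵀ and L̃ᵀ R = Ũ Σ Z̃ᵀ where U, Z, Ũ, Z̃ are orthogonal and Δ = diag(δ₁, …, δ_d), Σ = diag(τ₁, …, τ_d) are diagonal with nonincreasing nonnegative entries. Fix 1 ≤ r ≤ d with δ_r > 0 and τ_r > 0, and define T_r = R Z_r Δ_r^{-1/2}, S_rᵀ = Δ_r^{-1/2} U_rᵀ Lᵀ, T̃_r = R Z̃_r Σ_r^{-1/2}, S̃_rᵀ = Σ_r^{-1/2} Ũ_rᵀ L̃ᵀ, and the reduced matrices A_r = S_rᵀ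 A T_r, B_r = S_rᵀ B, C_r = C T_r and Ã_r = S̃_rᵀ A T̃_r, B̃_r = S̃_rᵀ B, C̃_r = C T̃_r for given A ∈ ℝ^{d×d}, B ∈ ℝ^{d×m}, C ∈ ℝ^{k×d}. If the first r columns of Z and Z̃ coincide (Z_r = Z̃_r), then with the diagonal matrix D = Σ_r^{-1/2} Δ_r^{1/2}: T̃_r = T_r D, S̃_rᵀ = D⁻¹ S_rᵀ, the state-space projections coincide (T̃_r S̃_rᵀ = T_r S_rᵀ), and the two reduced models are state-space equivalent: Ã_r = D⁻¹ A_r D, B̃_r = D⁻¹ B_r, C̃_r = C_r D. -/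
/-!
Right singular vectors alone determine both projection factors. From `Lᵀ R = U Δ Zᵀ` and the
orthogonality of `U` one gets `Uᵀ Lᵀ = Δ Zᵀ R⁻¹`, and the first `r` rows of this identity give
`S_rᵀ = Δ_r^{-1/2} U_rᵀ Lᵀ = Δ_r^{1/2} Z_rᵀ R⁻¹` (`left_factor_eq`). Hence, once `Z_r = Z̃_r`, the
two left factors, like the two right factors `R Z_r Δ_r^{-1/2}` and `R Z_r Σ_r^{-1/2}`, differ only
by a diagonal scaling, which is invertible because monotonicity makes the first `r` singular values
positive. The remaining identities follow by associativity and `D D⁻¹ = 1`.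
-/

open Matrix

noncomputable section

/-- The left balancing factor in terms of right singular vectors:
`Δ_r^{-1/2} U_rᵀ Lᵀ = Δ_r^{1/2} Z_rᵀ R⁻¹`. No sign condition on `δ`
is needed: `(√x)⁻¹ * x = √x` for every real `x`, both sides being `0` when `x ≤ 0`. -/
lemma left_factor_eq {d r : ℕ} (c : Fin r → Fin d) (R L U Z : Matrix (Fin d) (Fin d) ℝ)
    (δ : Fin d → ℝ) (hR : IsUnit R) (hU : Uᵀ * U = 1)
    (hSVD : Lᵀ * R = U * Matrix.diagonal δ * Zᵀ) :
    (Matrix.diagonal fun i : Fin r => (Real.sqrt (δ (c i)))⁻¹) * (U.submatrix id c)ᵀ * Lᵀ =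
      (Matrix.diagonal fun i : Fin r => Real.sqrt (δ (c i))) * (Z.submatrix id c)ᵀ * R⁻¹ := by
  have hdet : IsUnit R.det := (Matrix.isUnit_iff_isUnit_det R).1 hR
  have hfull : Uᵀ * Lᵀ = Matrix.diagonal δ * (Zᵀ * R⁻¹) := by
    calc Uᵀ * Lᵀ = Uᵀ * (Lᵀ * R) * R⁻¹ := by
          rw [Matrix.mul_assoc, Matrix.mul_nonsing_inv_cancel_right _ _ hdet]
      _ = (Uᵀ * U) * (Matrix.diagonal δ * (Zᵀ * R⁻¹)) := by
          rw [hSVD]; simp only [Matrix.mul_assoc]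
      _ = _ := by rw [hU, Matrix.one_mul]
  rw [Matrix.mul_assoc, Matrix.mul_assoc]
  ext i j
  have hij := congrFun (congrFun hfull (c i)) j
  rw [Matrix.diagonal_mul] at hij ⊢
  rw [Matrix.diagonal_mul]
  change _ * (Uᵀ * Lᵀ) (c i) j = _ * (Zᵀ * R⁻¹) (c i) j
  rw [hij, ← mul_assoc]
  congr 1
  rw [inv_mul_eq_div, Real.div_sqrt]

/-- If the `r` dominant generalized eigenvector directions of the two
pencils `(Q, Γ_pr⁻¹)` and `(H, Γ_pr⁻¹)` match (i.e. the first `r` columns of `Z` and `Z̃`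
in the respective SVDs coincide), then with `D = Σ_r^{-1/2} Δ_r^{1/2}` the two balanced
truncation constructions satisfy `T̃_r = T_r D`, `S̃_rᵀ = D⁻¹ S_rᵀ`, the state-space
projections coincide, and the reduced models are state-space equivalent:
`Ã_r = D⁻¹ A_r D`, `B̃_r = D⁻¹ B_r`, `C̃_r = C_r D`. -/
theorem bt_models_state_space_equivalent {d m k : ℕ} (r : ℕ) (hr1 : 1 ≤ r) (hr : r ≤ d)
    (A : Matrix (Fin d) (Fin d) ℝ) (B : Matrix (Fin d) (Fin m) ℝ) (C : Matrix (Fin k) (Fin d) ℝ)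
    (Γpr Q H R L Lt U Z Ut Zt : Matrix (Fin d) (Fin d) ℝ) (δ τ : Fin d → ℝ)
    (hΓpr : Γpr.PosDef) (hΓprsymm : Γpr.IsSymm)
    (hQ : Q.PosSemidef) (hH : H.PosSemidef)
    (hPf : Γpr = R * Rᵀ) (hR : IsUnit R)
    (hQf : Q = L * Lᵀ) (hHf : H = Lt * Ltᵀ)
    (hU : Uᵀ * U = 1 ∧ U * Uᵀ = 1) (hZ : Zᵀ * Z = 1 ∧ Z * Zᵀ = 1)
    (hUt : Utᵀ * Ut = 1 ∧ Ut * Utᵀ = 1) (hZt : Ztᵀ * Zt = 1 ∧ Zt * Ztᵀ = 1)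
    (hSVD1 : Lᵀ * R = U * Matrix.diagonal δ * Zᵀ)
    (hSVD2 : Ltᵀ * R = Ut * Matrix.diagonal τ * Ztᵀ)
    (hδnonneg : ∀ i, 0 ≤ δ i) (hδmono : ∀ i j : Fin d, i ≤ j → δ j ≤ δ i)
    (hτnonneg : ∀ i, 0 ≤ τ i) (hτmono : ∀ i j : Fin d, i ≤ j → τ j ≤ τ i)
    (hδr : 0 < δ ⟨r - 1, by omega⟩) (hτr : 0 < τ ⟨r - 1, by omega⟩)
    (hZr : ∀ (a : Fin d) (i : Fin d), (i : ℕ) < r → Z a i = Zt a i) :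
    let cast : Fin r → Fin d := Fin.castLE hr
    let Δrinvhalf : Matrix (Fin r) (Fin r) ℝ :=
      Matrix.diagonal fun i : Fin r => (Real.sqrt (δ (cast i)))⁻¹
    let Sigrinvhalf : Matrix (Fin r) (Fin r) ℝ :=
      Matrix.diagonal fun i : Fin r => (Real.sqrt (τ (cast i)))⁻¹
    let D : Matrix (Fin r) (Fin r) ℝ :=
      Matrix.diagonal fun i : Fin r => (Real.sqrt (τ (cast i)))⁻¹ * Real.sqrt (δ (cast i))
    let Dinv : Matrix (Fin r) (Fin r) ℝ :=
      Matrix.diagonal fun i : Fin r => Real.sqrt (τ (cast i)) * (Real.sqrt (δ (cast i)))⁻¹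
    let Tr := R * Z.submatrix id cast * Δrinvhalf
    let Srt := Δrinvhalf * (U.submatrix id cast)ᵀ * Lᵀ
    let Ttr := R * Zt.submatrix id cast * Sigrinvhalf
    let Stsrt := Sigrinvhalf * (Ut.submatrix id cast)ᵀ * Ltᵀ
    let Ar := Srt * A * Tr
    let Br := Srt * B
    let Cr := C * Tr
    let Atr := Stsrt * A * Ttr
    let Btr := Stsrt * B
    let Ctr := C * Ttr
    Ttr = Tr * D ∧ Stsrt = Dinv * Srt ∧ Ttr * Stsrt = Tr * Srt ∧
      Atr = Dinv * Ar * D ∧ Btr = Dinv * Br ∧ Ctr = Cr * D := by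
  intro cast Δrinvhalf Sigrinvhalf D Dinv Tr Srt Ttr Stsrt Ar Br Cr Atr Btr Ctr
  have hsδ : ∀ i, Real.sqrt (δ (cast i)) ≠ 0 := fun i =>
    (Real.sqrt_pos.2 (hδr.trans_le (hδmono _ _ (Fin.mk_le_mk.2 (Nat.le_sub_one_of_lt i.2))))).ne'
  have hsτ : ∀ i, Real.sqrt (τ (cast i)) ≠ 0 := fun i =>
    (Real.sqrt_pos.2 (hτr.trans_le (hτmono _ _ (Fin.mk_le_mk.2 (Nat.le_sub_one_of_lt i.2))))).ne'
  have hZZ : Zt.submatrix id cast = Z.submatrix id cast := by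
    ext a i
    exact (hZr a (cast i) i.2).symm
  have hT : Ttr = Tr * D := by
    simp only [Ttr, Tr, D, Δrinvhalf, Sigrinvhalf, hZZ]
    rw [Matrix.mul_assoc _ (Matrix.diagonal _) (Matrix.diagonal _), Matrix.diagonal_mul_diagonal]
    congr 2
    funext i
    have := hsδ i
    field_simp
  have hS : Stsrt = Dinv * Srt := by
    have h1 := left_factor_eq cast R L U Z δ hR hU.1 hSVD1
    have h2 := left_factor_eq cast R Lt Ut Zt τ hR hUt.1 hSVD2
    simp only [Stsrt, Srt, Dinv, Δrinvhalf, Sigrinvhalf]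
    rw [h1, h2, hZZ, ← Matrix.mul_assoc, ← Matrix.mul_assoc, Matrix.diagonal_mul_diagonal]
    congr 3
    funext i
    rw [inv_mul_cancel_right₀ (hsδ i)]
  have hDD : D * Dinv = 1 := by
    simp only [D, Dinv]
    rw [Matrix.diagonal_mul_diagonal, ← Matrix.diagonal_one]
    congr 1
    funext i
    have := hsδ i
    have := hsτ i
    field_simp
  refine ⟨hT, hS, ?_, ?_, ?_, ?_⟩
  · rw [hT, hS, Matrix.mul_assoc, ← Matrix.mul_assoc D, hDD, Matrix.one_mul]
  · simp only [Atr, Ar, hT, hS, Matrix.mul_assoc]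
  · simp only [Btr, Br, hS, Matrix.mul_assoc]
  · simp only [Ctr, Cr, hT, Matrix.mul_assoc]
end
end

section
/- Let Γ_pr ∈ ℝ^{d×d} be symmetric positive definite and H ∈ ℝ^{d×d} symmetric positive semidefinite. Suppose W ∈ ℝ^{d×d} has columns w₁, …, w_d satisfying Wᵀ Γ_pr⁻¹ W = I and H W = Γ_pr⁻¹ W diag(τ₁², …, τ_d²) with τ_i ≥ 0. Then the posterior covariance admits the decomposition (Γ_pr⁻¹ + H)⁻¹ = Γ_pr − ∑_{i=1}^{d} (τ_i² / (1 + τ_i²)) w_i w_iᵀ. -/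
/-!
The normalization `Wᵀ Γpr⁻¹ W = 1` says that the square matrix `W` is invertible with inverse
`Wᵀ Γpr⁻¹`, so `W Wᵀ = Γpr`. With `D = diag(τᵢ²)`, the sum in the theorem is `W D(1 + D)⁻¹ Wᵀ`,
hence the right-hand side is `W (1 + D)⁻¹ Wᵀ`. The eigenvalue equation gives
`(Γpr⁻¹ + H) W = Γpr⁻¹ W (1 + D)`, so multiplying the right-hand side by `Γpr⁻¹ + H` leaves
`Γpr⁻¹ W Wᵀ = 1`.
-/

open Matrix

noncomputable section

lemma sum_smul_vecMulVec_col {d : ℕ} (W : Matrix (Fin d) (Fin d) ℝ) (c : Fin d → ℝ) :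
    ∑ i : Fin d, c i • Matrix.vecMulVec (fun a => W a i) (fun b => W b i) =
      W * Matrix.diagonal c * Wᵀ := by
  ext a b
  simp only [Matrix.sum_apply, Matrix.smul_apply, Matrix.vecMulVec_apply, smul_eq_mul,
    Matrix.mul_apply (M := W * Matrix.diagonal c), Matrix.mul_diagonal, Matrix.transpose_apply]
  exact Finset.sum_congr rfl fun i _ => by ring

/-- Let `Γ_pr` be SPD and `H` symmetric PSD, and let `W` have columns
`w₁, …, w_d` with `Wᵀ Γ_pr⁻¹ W = I` and `H W = Γ_pr⁻¹ W diag(τ₁², …, τ_d²)`, `τ_i ≥ 0`.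
Then the posterior covariance decomposes as
`(Γ_pr⁻¹ + H)⁻¹ = Γ_pr − ∑_{i=1}^d (τ_i²/(1 + τ_i²)) w_i w_iᵀ`. -/
theorem posterior_covariance_decomposition {d : ℕ}
    (Γpr H W : Matrix (Fin d) (Fin d) ℝ) (τ : Fin d → ℝ)
    (hΓprsymm : Γpr.IsSymm) (hΓpr : Γpr.PosDef)
    (hHsymm : H.IsSymm) (hH : H.PosSemidef)
    (hW : Wᵀ * Γpr⁻¹ * W = 1)
    (hHW : H * W = Γpr⁻¹ * W * Matrix.diagonal fun i => τ i ^ 2)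
    (hτnonneg : ∀ i, 0 ≤ τ i) :
    (Γpr⁻¹ + H)⁻¹ =
      Γpr - ∑ i : Fin d, (τ i ^ 2 / (1 + τ i ^ 2)) •
        Matrix.vecMulVec (fun a => W a i) (fun b => W b i) := by
  have hinv : Γpr⁻¹ * (W * Wᵀ) = 1 := by
    have h := mul_eq_one_comm.mp hW
    rw [← Matrix.mul_assoc] at h
    exact mul_eq_one_comm.mp h
  have hdet : IsUnit Γpr.det := (Matrix.isUnit_iff_isUnit_det _).mp hΓpr.isUnit
  have hΓ : Γpr = W * Wᵀ := by
    rw [← Matrix.mul_one Γpr, ← hinv, Matrix.mul_nonsing_inv_cancel_left _ _ hdet]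
  have hpos : ∀ i, 1 + τ i ^ 2 ≠ 0 := fun i => by positivity
  have hrhs : Γpr - ∑ i : Fin d, (τ i ^ 2 / (1 + τ i ^ 2)) •
        Matrix.vecMulVec (fun a => W a i) (fun b => W b i) =
      W * Matrix.diagonal (fun i => (1 + τ i ^ 2)⁻¹) * Wᵀ := by
    have hdiag : Matrix.diagonal (fun i => (1 + τ i ^ 2)⁻¹) =
        1 - Matrix.diagonal (fun i => τ i ^ 2 / (1 + τ i ^ 2)) := by
      rw [← Matrix.diagonal_one, Matrix.diagonal_sub]
      congr 1
      funext i
      have := hpos i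
      field_simp
      ring
    rw [sum_smul_vecMulVec_col W (fun i => τ i ^ 2 / (1 + τ i ^ 2)), hdiag, Matrix.mul_sub,
      Matrix.sub_mul, Matrix.mul_one, ← hΓ]
  have heig : (Γpr⁻¹ + H) * W = Γpr⁻¹ * W * Matrix.diagonal (fun i => 1 + τ i ^ 2) := by
    rw [Matrix.add_mul, hHW, ← Matrix.diagonal_add, Matrix.mul_add, Matrix.diagonal_one,
      Matrix.mul_one]
  have hcancel : Matrix.diagonal (fun i => 1 + τ i ^ 2) *
      Matrix.diagonal (fun i => (1 + τ i ^ 2)⁻¹) = 1 := by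
    simp [Matrix.diagonal_mul_diagonal, hpos]
  rw [hrhs]
  apply Matrix.inv_eq_right_inv
  rw [← Matrix.mul_assoc, ← Matrix.mul_assoc, heig, Matrix.mul_assoc (Γpr⁻¹ * W), hcancel,
    Matrix.mul_one, Matrix.mul_assoc, hinv]
end
end

section
/- Let M₀ ∈ ℝ^{d×d} be symmetric with spectral decomposition M₀ = ∑_{i=1}^{d} λ_i u_i u_iᵀ, where the u_i are orthonormal eigenvectors and λ_i the corresponding eigenvalues, and let M₋ = ∑_{i : λ_i ≤ 0} λ_i u_i u_iᵀ be its negative semidefinite part. Then M₋ is a nearest negative semidefinite matrix to M₀ in both the Frobenius norm and the spectral (operator) norm: for every symmetric negative semidefinite matrix N ∈ ℝ^{d×d}, ‖M₀ − M₋‖_F ≤ ‖M₀ − N‖_F and ‖M₀ − M₋‖₂ ≤ ‖M₀ − N‖₂. -/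
/-!
Put `P = M₀ - M₋ = ∑ max(λ_i, 0) u_i u_iᵀ` and `A = M₀ - N`. Everything rests on one comparison:
since `N` is negative semidefinite, `u_iᵀ A u_i ≥ u_iᵀ M₀ u_i = λ_i`.

* Frobenius norm: with `⟨X, Y⟩ = ∑ X_ij Y_ij`, one has `⟨P, X⟩ = ∑ max(λ_i, 0) u_iᵀ X u_i`
  (`sum_mul_spectral`), so the comparison gives `⟨P, P⟩ = ∑ max(λ_i, 0)² ≤ ⟨P, A⟩`. Expanding
  `0 ≤ ‖A - P‖_F²` then yields `‖P‖_F² ≤ 2⟨P, A⟩ - ‖P‖_F² ≤ ‖A‖_F²`.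
* Spectral norm: by Parseval, `‖P x‖ ≤ max_i max(λ_i, 0)` for every unit vector `x`
  (`sum_sq_spectral_mulVec_le`). If the maximum is attained at `i`, Cauchy–Schwarz gives
  `max(λ_i, 0) ≤ ‖A u_i‖`, which is at most the spectral norm of `A`.
-/

open Matrix

noncomputable section

/-- The Frobenius norm of a real matrix: the square root of the sum of squared entries. -/
def frobNorm {d : ℕ} (X : Matrix (Fin d) (Fin d) ℝ) : ℝ :=
  Real.sqrt (∑ i, ∑ j, X i j ^ 2)

/-- The spectral (operator) norm of a real matrix: the supremum of the Euclidean norms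
`‖X x‖` over Euclidean unit vectors `x`; this is the largest singular value of `X`. -/
def specNorm {d : ℕ} (X : Matrix (Fin d) (Fin d) ℝ) : ℝ :=
  sSup {c : ℝ | ∃ x : Fin d → ℝ, (∑ i, x i ^ 2) = 1 ∧
    c = Real.sqrt (∑ i, (X.mulVec x) i ^ 2)}

/-- The symmetric matrix `∑ p_i u_i u_iᵀ` with prescribed eigenvalues `p` along the family `u`. -/
def spectral {d : ℕ} (u : Fin d → Fin d → ℝ) (p : Fin d → ℝ) : Matrix (Fin d) (Fin d) ℝ :=
  ∑ i, p i • Matrix.vecMulVec (u i) (u i)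

/-- The Frobenius inner product with `∑ p_i u_i u_iᵀ` is a weighted sum of quadratic forms. -/
lemma sum_mul_spectral {d : ℕ} (u : Fin d → Fin d → ℝ) (p : Fin d → ℝ)
    (X : Matrix (Fin d) (Fin d) ℝ) :
    ∑ a, ∑ b, spectral u p a b * X a b = ∑ i, p i * (u i ⬝ᵥ X.mulVec (u i)) := by
  simp only [spectral, Matrix.sum_apply, Matrix.smul_apply, Matrix.vecMulVec_apply, smul_eq_mul,
    dotProduct, Matrix.mulVec, Finset.sum_mul, Finset.mul_sum]
  conv_lhs => enter [2, a]; rw [Finset.sum_comm]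
  rw [Finset.sum_comm]
  refine Finset.sum_congr rfl fun i _ => Finset.sum_congr rfl fun a _ =>
    Finset.sum_congr rfl fun b _ => ?_
  ring

lemma spectral_mulVec {d : ℕ} (u : Fin d → Fin d → ℝ) (p : Fin d → ℝ) (x : Fin d → ℝ) :
    (spectral u p).mulVec x = (Matrix.of u)ᵀ.mulVec (fun i => p i * (u i ⬝ᵥ x)) := by
  ext a
  simp only [spectral, Matrix.mulVec, dotProduct, Matrix.sum_apply, Matrix.smul_apply,
    Matrix.vecMulVec_apply, smul_eq_mul, Matrix.transpose_apply, Matrix.of_apply,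
    Finset.sum_mul, Finset.mul_sum]
  rw [Finset.sum_comm]
  refine Finset.sum_congr rfl fun i _ => Finset.sum_congr rfl fun b _ => ?_
  ring

lemma of_mul_transpose {d : ℕ} {u : Fin d → Fin d → ℝ}
    (horth : ∀ i j, u i ⬝ᵥ u j = if i = j then (1 : ℝ) else 0) :
    Matrix.of u * (Matrix.of u)ᵀ = 1 := by
  ext i j
  rw [Matrix.one_apply, ← horth i j]
  rfl

lemma quadForm_spectral {d : ℕ} {u : Fin d → Fin d → ℝ}
    (horth : ∀ i j, u i ⬝ᵥ u j = if i = j then (1 : ℝ) else 0) (p : Fin d → ℝ) (i : Fin d) :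
    u i ⬝ᵥ (spectral u p).mulVec (u i) = p i := by
  simp [spectral, Matrix.sum_mulVec, Matrix.smul_mulVec, Matrix.vecMulVec_mulVec, horth]

/-- A matrix whose transpose is a left inverse preserves the Euclidean norm. -/
lemma sum_sq_mulVec_of_transpose_mul {d : ℕ} {V : Matrix (Fin d) (Fin d) ℝ} (hV : Vᵀ * V = 1)
    (x : Fin d → ℝ) : ∑ i, (V.mulVec x) i ^ 2 = ∑ i, x i ^ 2 := by
  have h : V.mulVec x ⬝ᵥ V.mulVec x = x ⬝ᵥ x := by
    rw [Matrix.dotProduct_mulVec, Matrix.vecMul_mulVec, hV, Matrix.vecMul_one]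
  simpa [dotProduct, sq] using h

/-- If all eigenvalues lie in `[0, c]`, then `∑ p_i u_i u_iᵀ` expands unit vectors by at most `c`. -/
lemma sum_sq_spectral_mulVec_le {d : ℕ} {u : Fin d → Fin d → ℝ}
    (horth : ∀ i j, u i ⬝ᵥ u j = if i = j then (1 : ℝ) else 0) {p : Fin d → ℝ} {c : ℝ}
    (hp : ∀ i, 0 ≤ p i) (hc : ∀ i, p i ≤ c) {x : Fin d → ℝ} (hx : ∑ i, x i ^ 2 = 1) :
    ∑ i, ((spectral u p).mulVec x) i ^ 2 ≤ c ^ 2 := by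
  have hU := of_mul_transpose horth
  -- Parseval for `x` in the basis `u`; it uses that a right inverse of a square matrix is
  -- also a left inverse.
  have hpars : ∑ i, (u i ⬝ᵥ x) ^ 2 = 1 :=
    (sum_sq_mulVec_of_transpose_mul (mul_eq_one_comm.mp hU) x).trans hx
  rw [spectral_mulVec, sum_sq_mulVec_of_transpose_mul (by rwa [Matrix.transpose_transpose])]
  calc ∑ i, (p i * (u i ⬝ᵥ x)) ^ 2 ≤ ∑ i, c ^ 2 * (u i ⬝ᵥ x) ^ 2 := by
        refine Finset.sum_le_sum fun i _ => ?_
        rw [mul_pow]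
        exact mul_le_mul_of_nonneg_right (pow_le_pow_left₀ (hp i) (hc i) 2) (sq_nonneg _)
    _ = c ^ 2 := by rw [← Finset.mul_sum, hpars, mul_one]

/-- The set whose supremum is the spectral norm is bounded by the Frobenius norm; without this
the supremum would carry no information. -/
lemma bddAbove_specNorm_set {d : ℕ} (X : Matrix (Fin d) (Fin d) ℝ) :
    BddAbove {c : ℝ | ∃ x : Fin d → ℝ, (∑ i, x i ^ 2) = 1 ∧
      c = Real.sqrt (∑ i, (X.mulVec x) i ^ 2)} := by
  refine ⟨frobNorm X, ?_⟩
  rintro c ⟨x, hx, rfl⟩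
  refine Real.sqrt_le_sqrt (Finset.sum_le_sum fun i _ => ?_)
  have h := Finset.sum_mul_sq_le_sq_mul_sq Finset.univ (X i) x
  rwa [hx, mul_one] at h

lemma specNorm_nonneg {d : ℕ} (X : Matrix (Fin d) (Fin d) ℝ) : 0 ≤ specNorm X := by
  refine Real.sSup_nonneg ?_
  rintro c ⟨x, -, rfl⟩
  exact Real.sqrt_nonneg _

/-- Let `M₀` be symmetric with spectral decomposition
`M₀ = ∑ λ_i u_i u_iᵀ` (orthonormal `u_i`) and let `M₋ = ∑_{λ_i ≤ 0} λ_i u_i u_iᵀ` be its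
negative semidefinite part. Then `M₋` is a nearest negative semidefinite matrix to `M₀` in
both the Frobenius norm and the spectral norm: for every symmetric negative semidefinite
`N`, one has `‖M₀ − M₋‖_F ≤ ‖M₀ − N‖_F` and `‖M₀ − M₋‖₂ ≤ ‖M₀ − N‖₂`. -/
theorem nearest_negative_semidefinite {d : ℕ}
    (M0 : Matrix (Fin d) (Fin d) ℝ) (hM0 : M0.IsSymm)
    (u : Fin d → Fin d → ℝ) (lam : Fin d → ℝ)
    (horth : ∀ i j, u i ⬝ᵥ u j = if i = j then (1 : ℝ) else 0)
    (hspec : M0 = ∑ i, lam i • Matrix.vecMulVec (u i) (u i)) :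
    let Mneg : Matrix (Fin d) (Fin d) ℝ :=
      ∑ i ∈ Finset.univ.filter fun i => lam i ≤ 0, lam i • Matrix.vecMulVec (u i) (u i)
    ∀ N : Matrix (Fin d) (Fin d) ℝ, N.IsSymm → (∀ x : Fin d → ℝ, x ⬝ᵥ N.mulVec x ≤ 0) →
      frobNorm (M0 - Mneg) ≤ frobNorm (M0 - N) ∧
        specNorm (M0 - Mneg) ≤ specNorm (M0 - N) := by
  intro Mneg N _ hN
  set p : Fin d → ℝ := fun i => max (lam i) 0 with hp
  have hp0 : ∀ i, 0 ≤ p i := fun i => le_max_right _ _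
  have hP : M0 - Mneg = spectral u p := by
    rw [sub_eq_iff_eq_add, hspec]
    simp only [Mneg, spectral, Finset.sum_filter, ← Finset.sum_add_distrib]
    refine Finset.sum_congr rfl fun i _ => ?_
    by_cases h : lam i ≤ 0
    · simp [hp, h]
    · simp [hp, h, le_of_not_ge h]
  have hquad : ∀ i, lam i ≤ u i ⬝ᵥ (M0 - N).mulVec (u i) := by
    intro i
    have h0 : u i ⬝ᵥ M0.mulVec (u i) = lam i := by
      rw [hspec]
      exact quadForm_spectral horth lam i
    rw [Matrix.sub_mulVec, dotProduct_sub, h0]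
    linarith [hN (u i)]
  rw [hP]
  generalize M0 - N = A at hquad
  constructor
  · refine Real.sqrt_le_sqrt ?_
    have hPA : ∑ a, ∑ b, spectral u p a b * spectral u p a b
        ≤ ∑ a, ∑ b, spectral u p a b * A a b := by
      rw [sum_mul_spectral, sum_mul_spectral]
      refine Finset.sum_le_sum fun i _ => ?_
      rw [quadForm_spectral horth]
      -- When `lam i ≤ 0` the weight `p i` vanishes; otherwise `p i = lam i`.
      rcases le_total (lam i) 0 with h | h
      · simp [hp, h]
      · refine mul_le_mul_of_nonneg_left ?_ (hp0 i)
        simpa [hp, h] using hquad i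
    have hsq : 0 ≤ ∑ a, ∑ b, (A a b - spectral u p a b) ^ 2 :=
      Finset.sum_nonneg fun a _ => Finset.sum_nonneg fun b _ => sq_nonneg _
    have hexp : ∑ a, ∑ b, (A a b - spectral u p a b) ^ 2
        = ∑ a, ∑ b, A a b ^ 2 - 2 * ∑ a, ∑ b, spectral u p a b * A a b
          + ∑ a, ∑ b, spectral u p a b ^ 2 := by
      simp only [Finset.mul_sum, ← Finset.sum_sub_distrib, ← Finset.sum_add_distrib]
      refine Finset.sum_congr rfl fun a _ => Finset.sum_congr rfl fun b _ => ?_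
      ring
    simp only [← sq] at hPA
    linarith
  · have hle : ∀ i, p i ≤ specNorm A := by
      intro i
      have hui : ∑ j, u i j ^ 2 = 1 := by
        simpa [dotProduct, sq] using horth i i
      refine max_le ?_ (specNorm_nonneg A)
      refine le_trans ?_ (le_csSup (bddAbove_specNorm_set A) ⟨u i, hui, rfl⟩)
      refine (hquad i).trans (Real.le_sqrt_of_sq_le ?_)
      have h := Finset.sum_mul_sq_le_sq_mul_sq Finset.univ (u i) (A.mulVec (u i))
      rwa [hui, one_mul] at h
    refine Real.sSup_le ?_ (specNorm_nonneg A)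
    rintro c ⟨x, hx, rfl⟩
    exact Real.sqrt_le_iff.mpr
      ⟨specNorm_nonneg A, sum_sq_spectral_mulVec_le horth hp0 hle hx⟩
end
end
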